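/- Let X be a compact metric space and α : X → X a homeomorphism such that the forward proximality relation and the backward proximality relation are both transitive. Let E, E⁺, E⁻ be the closures of {α^n : n ∈ ℤ}, {α^n : n ≥ 0}, {α^n : n ≤ 0} in the self-maps of X with the product topology, and let M, M⁺, M⁻ denote their kernels (smallest two-sided ideals). Then exactly one of the following two alternatives holds: (1) proximality is transitive, E has a unique minimal left ideal, and M = M⁺ = M⁻; or (2) proximality is not transitive, M⁺ ∩ M⁻ = ∅, and M⁺ and M⁻ are precisely the minimal left ideals of E (so E has exactly two minimal left ideals). -/

import Mathlib

/-- The `n`-th power (`n : ℤ`) of a homeomorphism `α`, as a self-map. -/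
def zIter {X : Type*} [TopologicalSpace X] (α : X ≃ₜ X) (n : ℤ) : X → X :=
  if 0 ≤ n then (⇑α)^[n.toNat] else (⇑α.symm)^[(-n).toNat]

/-- A left ideal of the subsemigroup `S` of self-maps of `X` (under composition). -/
def IsLeftIdealIn {X : Type*} (S L : Set (X → X)) : Prop :=
  L.Nonempty ∧ L ⊆ S ∧ ∀ f ∈ S, ∀ g ∈ L, f ∘ g ∈ L

/-- A minimal left ideal of `S`. -/
def IsMinLeftIdealIn {X : Type*} (S L : Set (X → X)) : Prop :=
  IsLeftIdealIn S L ∧ ∀ L' : Set (X → X), IsLeftIdealIn S L' → L' ⊆ L → L' = L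

/-- A two-sided ideal of the subsemigroup `S` of self-maps of `X`. -/
def IsIdealIn {X : Type*} (S I : Set (X → X)) : Prop :=
  I.Nonempty ∧ I ⊆ S ∧ ∀ f ∈ S, ∀ g ∈ I, f ∘ g ∈ I ∧ g ∘ f ∈ I

/-- The kernel of `S`: the smallest two-sided ideal of `S`. -/
def IsKernelOf {X : Type*} (S K : Set (X → X)) : Prop :=
  IsIdealIn S K ∧ ∀ I : Set (X → X), IsIdealIn S I → K ⊆ I

/-- Proximality for the `ℤ`-action generated by the homeomorphism `α`. -/
def ZProx {X : Type*} [MetricSpace X] (α : X ≃ₜ X) (x y : X) : Prop :=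
  ∀ ε > 0, ∃ n : ℤ, dist (zIter α n x) (zIter α n y) < ε

open Set Topology

/-- A submonoid of continuous self-maps. -/
structure TM {X : Type*} [TopologicalSpace X] (T : Set (X → X)) : Prop where
  one : id ∈ T
  comp : ∀ f ∈ T, ∀ g ∈ T, f ∘ g ∈ T
  cont : ∀ f ∈ T, Continuous f

theorem cont_rcomp {X : Type*} [TopologicalSpace X] (g : X → X) :
    Continuous (fun f : X → X => f ∘ g) :=
  continuous_pi fun x => continuous_apply (g x)

theorem cont_lcomp {X : Type*} [TopologicalSpace X] (g : X → X) (hg : Continuous g) :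
    Continuous (fun f : X → X => g ∘ f) :=
  continuous_pi fun x => hg.comp (continuous_apply x)

theorem TM.mul {X : Type*} [TopologicalSpace X] {T : Set (X → X)} (h : TM T)
    {f g : X → X} (hf : f ∈ closure T) (hg : g ∈ closure T) : f ∘ g ∈ closure T := by
  have h1 : ∀ f ∈ T, ∀ g ∈ closure T, f ∘ g ∈ closure T := by
    intro f hf g hg
    exact map_mem_closure (cont_lcomp f (h.cont f hf)) hg (fun g hg => h.comp f hf g hg)
  have := map_mem_closure (t := closure T) (cont_rcomp g) hf (fun f hf => h1 f hf g hg)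
  rwa [closure_closure] at this

theorem TM.id_mem {X : Type*} [TopologicalSpace X] {T : Set (X → X)} (h : TM T) :
    id ∈ closure T := subset_closure h.one

theorem TM.principal {X : Type*} [TopologicalSpace X] {T : Set (X → X)} (h : TM T)
    {f : X → X} (hf : f ∈ closure T) :
    IsLeftIdealIn (closure T) ((fun g => g ∘ f) '' closure T) := by
  refine ⟨⟨_, id, h.id_mem, rfl⟩, ?_, ?_⟩
  · rintro _ ⟨g, hg, rfl⟩
    exact h.mul hg hf
  · rintro k hk _ ⟨g, hg, rfl⟩
    exact ⟨k ∘ g, h.mul hk hg, rfl⟩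

theorem principal_closed {X : Type*} [TopologicalSpace X] [CompactSpace X] [T2Space X]
    {T : Set (X → X)} (f : X → X) : IsClosed ((fun g => g ∘ f) '' closure T) :=
  (isClosed_closure.isCompact.image (cont_rcomp f)).isClosed

theorem principal_sub {X : Type*} {S L : Set (X → X)} (hL : IsLeftIdealIn S L)
    {f : X → X} (hf : f ∈ L) : ((fun g => g ∘ f) '' S) ⊆ L := by
  rintro _ ⟨g, hg, rfl⟩
  exact hL.2.2 g hg f hf

theorem TM.min_eq {X : Type*} [TopologicalSpace X] {T : Set (X → X)} (h : TM T)
    {L : Set (X → X)} (hL : IsMinLeftIdealIn (closure T) L) {f : X → X} (hf : f ∈ L) :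
    ((fun g => g ∘ f) '' closure T) = L :=
  hL.2 _ (h.principal (hL.1.2.1 hf)) (principal_sub hL.1 hf)

theorem TM.min_closed {X : Type*} [TopologicalSpace X] [CompactSpace X] [T2Space X]
    {T : Set (X → X)} (h : TM T)
    {L : Set (X → X)} (hL : IsMinLeftIdealIn (closure T) L) : IsClosed L := by
  obtain ⟨f, hf⟩ := hL.1.1
  rw [← h.min_eq hL hf]
  exact principal_closed f

theorem TM.exists_min {X : Type*} [TopologicalSpace X] [CompactSpace X] [T2Space X]
    {T : Set (X → X)} (h : TM T) {L : Set (X → X)} (hL : IsLeftIdealIn (closure T) L) :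
    ∃ K, K ⊆ L ∧ IsMinLeftIdealIn (closure T) K := by
  obtain ⟨f, hf⟩ := hL.1
  obtain ⟨K, hK1, hK2⟩ := zorn_superset_nonempty
    {K : Set (X → X) | IsClosed K ∧ IsLeftIdealIn (closure T) K} (by
      intro c hc hch hne
      have hnem : (⋂₀ c).Nonempty := by
        haveI : Nonempty c := hne.to_subtype
        rw [sInter_eq_iInter]
        refine IsCompact.nonempty_iInter_of_directed_nonempty_isCompact_isClosed _ ?_
          (fun i => (hc i.2).2.1) (fun i => (hc i.2).1.isCompact) (fun i => (hc i.2).1)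
        rintro ⟨s, hs⟩ ⟨t, ht⟩
        rcases hch.total hs ht with hst | hst
        · exact ⟨⟨s, hs⟩, subset_rfl, hst⟩
        · exact ⟨⟨t, ht⟩, hst, subset_rfl⟩
      refine ⟨⋂₀ c, ⟨isClosed_sInter fun t ht => (hc ht).1, hnem, ?_, ?_⟩, fun s hs =>
        sInter_subset_of_mem hs⟩
      · obtain ⟨s, hs⟩ := hne
        exact (sInter_subset_of_mem hs).trans (hc hs).2.2.1
      · intro f hf g hg s hs
        exact (hc hs).2.2.2 f hf g (hg s hs))
    ((fun g => g ∘ f) '' closure T) ⟨principal_closed f, h.principal (hL.2.1 hf)⟩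
  refine ⟨K, hK1.trans (principal_sub hL hf), hK2.1.2, ?_⟩
  intro L' hL' hs
  obtain ⟨g, hg⟩ := hL'.1
  have h1 := hK2.2 (y := (fun k => k ∘ g) '' closure T)
    ⟨principal_closed g, h.principal (hL'.2.1 hg)⟩ ((principal_sub hL' hg).trans hs)
  exact hs.antisymm (h1.trans (principal_sub hL' hg))

theorem TM.exists_idem {X : Type*} [TopologicalSpace X] [CompactSpace X] [T2Space X]
    {T : Set (X → X)} (h : TM T) {L : Set (X → X)} (hL : IsMinLeftIdealIn (closure T) L) :
    ∃ u ∈ L, u ∘ u = u := by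
  letI : Semigroup (X → X) := { mul := fun f g => f ∘ g, mul_assoc := fun _ _ _ => rfl }
  exact exists_idempotent_in_compact_subsemigroup (fun r => cont_rcomp r) L hL.1.1
    (h.min_closed hL).isCompact (fun x hx y hy => hL.1.2.2 x (hL.1.2.1 hx) y hy)

/-- Proximality with respect to `T`. -/
def PX {X : Type*} [MetricSpace X] (T : Set (X → X)) (x y : X) : Prop :=
  ∀ ε > 0, ∃ t ∈ T, dist (t x) (t y) < ε

theorem TM.px_iff {X : Type*} [MetricSpace X] [CompactSpace X]
    {T : Set (X → X)} (h : TM T) (x y : X) :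
    PX T x y ↔ ∃ p ∈ closure T, p x = p y := by
  have hc : Continuous (fun f : X → X => dist (f x) (f y)) :=
    (continuous_apply x).dist (continuous_apply y)
  constructor
  · intro hp
    obtain ⟨p, hp1, hp2⟩ := (isClosed_closure (s := T)).isCompact.exists_isMinOn
      ⟨id, h.id_mem⟩ hc.continuousOn
    refine ⟨p, hp1, ?_⟩
    by_contra hne
    obtain ⟨t, ht, hlt⟩ := hp _ (dist_pos.2 hne)
    exact absurd (hp2 (subset_closure ht)) (not_le.2 hlt)
  · rintro ⟨p, hp, he⟩ ε hε
    obtain ⟨t, ht1, ht2⟩ := mem_closure_iff.1 hp {f | dist (f x) (f y) < ε}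
      (isOpen_lt hc continuous_const) (by simpa [he] using hε)
    exact ⟨t, ht2, ht1⟩

theorem TM.unique_of_trans {X : Type*} [MetricSpace X] [CompactSpace X]
    {T : Set (X → X)} (h : TM T) (ht : ∀ x y z, PX T x y → PX T y z → PX T x z)
    {L L' : Set (X → X)} (hL : IsMinLeftIdealIn (closure T) L)
    (hL' : IsMinLeftIdealIn (closure T) L') : L = L' := by
  obtain ⟨u, hu, huu⟩ := h.exists_idem hL
  have huS := hL.1.2.1 hu
  obtain ⟨w, hw, hwu⟩ : ∃ w ∈ L', w ∘ u = u := by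
    have : (fun g => g ∘ u) '' L' = L := by
      refine hL.2 _ ⟨hL'.1.1.image _, ?_, ?_⟩ ?_
      · rintro _ ⟨g, hg, rfl⟩
        exact h.mul (hL'.1.2.1 hg) huS
      · rintro f hf _ ⟨g, hg, rfl⟩
        exact ⟨f ∘ g, hL'.1.2.2 f hf g hg, rfl⟩
      · rintro _ ⟨g, hg, rfl⟩
        exact hL.1.2.2 g (hL'.1.2.1 hg) u hu
    rw [← this] at hu
    exact hu
  have e1 : ∀ x, u (u x) = u x := fun x => congrFun huu x
  have e2 : ∀ x, w (u x) = u x := fun x => congrFun hwu x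
  have hv : u ∘ w ∈ L' := hL'.1.2.2 u huS w hw
  have key : u = u ∘ w := by
    funext x
    have p1 : PX T (u x) x := (h.px_iff _ _).2 ⟨u, huS, e1 x⟩
    have p2 : PX T x (u (w x)) := (h.px_iff _ _).2 ⟨u ∘ w, hL'.1.2.1 hv, by
      simp only [Function.comp_apply, e1, e2]⟩
    obtain ⟨q, hq, hqe⟩ := (h.px_iff _ _).1 (ht _ _ _ p1 p2)
    have h3 := h.min_eq hL (hL.1.2.2 q hq u hu)
    rw [← h3] at hu
    obtain ⟨r, hr, hre⟩ := hu
    have e3 : ∀ x, r (q (u x)) = u x := fun x => congrFun hre x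
    calc u x = r (q (u x)) := (e3 x).symm
      _ = r (q (u (w x))) := by rw [hqe]
      _ = u (w x) := e3 _
  rw [← key] at hv
  rw [← h.min_eq hL hu, h.min_eq hL' hv]

theorem TM.min_rmul {X : Type*} [TopologicalSpace X]
    {T : Set (X → X)} (h : TM T) {L : Set (X → X)} (hL : IsMinLeftIdealIn (closure T) L)
    {g : X → X} (hg : g ∈ closure T) :
    IsMinLeftIdealIn (closure T) ((fun l => l ∘ g) '' L) := by
  refine ⟨⟨hL.1.1.image _, ?_, ?_⟩, ?_⟩
  · rintro _ ⟨l, hl, rfl⟩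
    exact h.mul (hL.1.2.1 hl) hg
  · rintro f hf _ ⟨l, hl, rfl⟩
    exact ⟨f ∘ l, hL.1.2.2 f hf l hl, rfl⟩
  · intro L' hL' hs
    have h1 : {l ∈ L | l ∘ g ∈ L'} = L := by
      refine hL.2 _ ⟨?_, fun l hl => hL.1.2.1 hl.1, ?_⟩ (fun l hl => hl.1)
      · obtain ⟨k, hk⟩ := hL'.1
        obtain ⟨l, hl, rfl⟩ := hs hk
        exact ⟨l, hl, hk⟩
      · rintro f hf l ⟨hl, hl'⟩
        exact ⟨hL.1.2.2 f hf l hl, hL'.2.2 f hf _ hl'⟩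
    refine hs.antisymm ?_
    rintro _ ⟨l, hl, rfl⟩
    rw [← h1] at hl
    exact hl.2

theorem TM.kernel_eq {X : Type*} [TopologicalSpace X]
    {T : Set (X → X)} (h : TM T) {L K : Set (X → X)} (hL : IsMinLeftIdealIn (closure T) L)
    (hu : ∀ L', IsMinLeftIdealIn (closure T) L' → L' = L) (hK : IsKernelOf (closure T) K) :
    K = L := by
  refine hL.2 K ⟨hK.1.1, hK.1.2.1, fun f hf g hg => (hK.1.2.2 f hf g hg).1⟩ (hK.2 L ?_)
  refine ⟨hL.1.1, hL.1.2.1, fun f hf g hg => ⟨hL.1.2.2 f hf g hg, ?_⟩⟩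
  rw [← hu _ (h.min_rmul hL hf)]
  exact ⟨g, hg, rfl⟩

theorem TM.trans_of_unique {X : Type*} [MetricSpace X] [CompactSpace X]
    {T : Set (X → X)} (h : TM T) {L : Set (X → X)} (hL : IsMinLeftIdealIn (closure T) L)
    (hu : ∀ L', IsMinLeftIdealIn (closure T) L' → L' = L) (x y z : X)
    (hxy : PX T x y) (hyz : PX T y z) : PX T x z := by
  have key : ∀ x y, PX T x y → ∀ l ∈ L, l x = l y := by
    intro x y hxy l hl
    obtain ⟨p, hp, he⟩ := (h.px_iff _ _).1 hxy
    rw [← hu _ (h.min_rmul hL hp)] at hl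
    obtain ⟨k, -, rfl⟩ := hl
    simp [he]
  obtain ⟨l, hl⟩ := hL.1.1
  exact (h.px_iff _ _).2 ⟨l, hL.1.2.1 hl, (key x y hxy l hl).trans (key y z hyz l hl)⟩

/-- Forward powers. -/
def FT {X : Type*} [TopologicalSpace X] (a : X ≃ₜ X) : Set (X → X) :=
  {h : X → X | ∃ n : ℕ, h = (⇑a)^[n]}

theorem FT_TM {X : Type*} [TopologicalSpace X] (a : X ≃ₜ X) : TM (FT a) := by
  refine ⟨⟨0, rfl⟩, ?_, ?_⟩
  · rintro _ ⟨n, rfl⟩ _ ⟨m, rfl⟩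
    exact ⟨n + m, (Function.iterate_add _ _ _).symm⟩
  · rintro _ ⟨n, rfl⟩
    exact a.continuous.iterate n

/-- The full set of powers. -/
def ZT {X : Type*} [TopologicalSpace X] (a : X ≃ₜ X) : Set (X → X) :=
  {h : X → X | ∃ n : ℤ, h = zIter a n}

theorem zIter_eq {X : Type*} [TopologicalSpace X] (a : X ≃ₜ X) (n : ℤ) :
    zIter a n = ⇑((a.toEquiv : Equiv.Perm X) ^ n) := by
  unfold zIter
  split_ifs with hn
  · obtain ⟨m, rfl⟩ := Int.eq_ofNat_of_zero_le hn
    simp only [Int.toNat_natCast, zpow_natCast, Equiv.Perm.coe_pow]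
    rfl
  · obtain ⟨m, hm⟩ := Int.eq_ofNat_of_zero_le (a := -n) (by omega)
    obtain rfl : n = -(m : ℤ) := by omega
    rw [neg_neg, Int.toNat_natCast, zpow_neg, zpow_natCast, ← inv_pow, Equiv.Perm.coe_pow]
    rfl

theorem ZT_eq {X : Type*} [TopologicalSpace X] (a : X ≃ₜ X) :
    ZT a = FT a ∪ FT a.symm := by
  ext f
  constructor
  · rintro ⟨n, rfl⟩
    unfold zIter
    split_ifs
    · exact Or.inl ⟨_, rfl⟩
    · exact Or.inr ⟨_, rfl⟩
  · rintro (⟨n, rfl⟩ | ⟨n, rfl⟩)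
    · exact ⟨n, by simp [zIter]⟩
    · refine ⟨-n, ?_⟩
      rw [zIter_eq, zpow_neg, zpow_natCast, ← inv_pow, Equiv.Perm.coe_pow]
      rfl

theorem ZT_TM {X : Type*} [TopologicalSpace X] (a : X ≃ₜ X) : TM (ZT a) := by
  refine ⟨⟨0, by simp [zIter]⟩, ?_, ?_⟩
  · rintro _ ⟨n, rfl⟩ _ ⟨m, rfl⟩
    refine ⟨n + m, ?_⟩
    rw [zIter_eq, zIter_eq, zIter_eq, zpow_add]
    rfl
  · rw [ZT_eq]
    rintro f (hf | hf)
    · exact (FT_TM _).cont f hf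
    · exact (FT_TM _).cont f hf

theorem min_lift {X : Type*} [TopologicalSpace X] [CompactSpace X] [T2Space X] (a : X ≃ₜ X)
    {K : Set (X → X)} (hK : IsMinLeftIdealIn (closure (FT a)) K) :
    IsMinLeftIdealIn (closure (FT a ∪ FT a.symm)) K := by
  have hcl := (FT_TM a).min_closed hK
  have ha : ⇑a ∈ closure (FT a) := subset_closure ⟨1, rfl⟩
  have hcomm : ∀ f ∈ closure (FT a), f ∘ a = a ∘ f := by
    intro f hf
    refine closure_minimal (s := FT a) (t := {f | f ∘ a = a ∘ f}) ?_
      (isClosed_eq (cont_rcomp _) (cont_lcomp _ a.continuous)) hf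
    rintro _ ⟨n, rfl⟩
    exact (Function.iterate_succ _ _).symm.trans (Function.iterate_succ' _ _)
  have him : (fun k => a ∘ k) '' K = K := by
    refine hK.2 _ ⟨hK.1.1.image _, ?_, ?_⟩ ?_
    · rintro _ ⟨k, hk, rfl⟩
      exact hK.1.2.1 (hK.1.2.2 _ ha k hk)
    · rintro f hf _ ⟨k, hk, rfl⟩
      refine ⟨f ∘ k, hK.1.2.2 f hf k hk, ?_⟩
      change (a ∘ f) ∘ k = (f ∘ a) ∘ k
      rw [hcomm f hf]
    · rintro _ ⟨k, hk, rfl⟩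
      exact hK.1.2.2 _ ha k hk
  have hinv : ∀ n : ℕ, ∀ k ∈ K, (⇑a.symm)^[n] ∘ k ∈ K := by
    intro n
    induction n with
    | zero => intro k hk; exact hk
    | succ n ih =>
      intro k hk
      rw [← him] at hk
      obtain ⟨k', hk', rfl⟩ := hk
      convert ih k' hk' using 1
      funext x
      simp
  refine ⟨⟨hK.1.1, hK.1.2.1.trans (closure_mono subset_union_left), ?_⟩, ?_⟩
  · intro f hf k hk
    refine closure_minimal (t := {f | f ∘ k ∈ K}) ?_ (hcl.preimage (cont_rcomp k)) hf
    rintro f (hf | ⟨n, rfl⟩)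
    · exact hK.1.2.2 f (subset_closure hf) k hk
    · exact hinv n k hk
  · intro L' hL' hs
    exact hK.2 L' ⟨hL'.1, hs.trans hK.1.2.1, fun f hf g hg =>
      hL'.2.2 f (closure_mono subset_union_left hf) g hg⟩ hs

theorem min_inter {X : Type*} {S L L' : Set (X → X)} (hL : IsMinLeftIdealIn S L)
    (hL' : IsMinLeftIdealIn S L') (hn : (L ∩ L').Nonempty) : L = L' := by
  have h : IsLeftIdealIn S (L ∩ L') := ⟨hn, fun x hx => hL.1.2.1 hx.1, fun f hf g hg =>
    ⟨hL.1.2.2 f hf g hg.1, hL'.1.2.2 f hf g hg.2⟩⟩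
  rw [← hL.2 _ h inter_subset_left, hL'.2 _ h inter_subset_right]

theorem min_half {X : Type*} [MetricSpace X] [CompactSpace X] (a : X ≃ₜ X)
    (ht : ∀ x y z, PX (FT a) x y → PX (FT a) y z → PX (FT a) x z)
    {K : Set (X → X)} (hK : IsKernelOf (closure (FT a)) K) :
    IsMinLeftIdealIn (closure (FT a ∪ FT a.symm)) K ∧
    ∀ L, IsMinLeftIdealIn (closure (FT a ∪ FT a.symm)) L → (L ∩ closure (FT a)).Nonempty →
      L = K := by
  have h := FT_TM a
  obtain ⟨K', -, hK'⟩ := h.exists_min (h.principal h.id_mem)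
  have hu : ∀ L', IsMinLeftIdealIn (closure (FT a)) L' → L' = K' :=
    fun L' hL' => h.unique_of_trans ht hL' hK'
  obtain rfl := h.kernel_eq hK' hu hK
  have hl := min_lift a hK'
  refine ⟨hl, ?_⟩
  rintro L hL ⟨f, hf, hfS⟩
  obtain ⟨K2, hs, hK2⟩ := h.exists_min (h.principal hfS)
  obtain rfl := hu _ hK2
  obtain ⟨k, hk⟩ := hK2.1.1
  refine min_inter hL hl ⟨k, ?_, hk⟩
  obtain ⟨g, hg, rfl⟩ := hs hk
  exact hL.1.2.2 g (closure_mono subset_union_left hg) f hf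

theorem px_FT {X : Type*} [MetricSpace X] (a : X ≃ₜ X) (x y : X) :
    PX (FT a) x y ↔ ∀ ε > 0, ∃ n : ℕ, dist ((⇑a)^[n] x) ((⇑a)^[n] y) < ε := by
  simp [PX, FT]

theorem px_ZT {X : Type*} [MetricSpace X] (a : X ≃ₜ X) (x y : X) :
    PX (ZT a) x y ↔ ZProx a x y := by
  simp [PX, ZT, ZProx]

/-- If forward and backward proximality are transitive, then either
proximality is transitive, `E` has a unique minimal left ideal and `M = M⁺ = M⁻`, or
proximality is not transitive, `M⁺ ∩ M⁻ = ∅` and `M⁺`, `M⁻` are precisely the minimal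
left ideals of `E`. -/
theorem stmt_10 {X : Type*} [MetricSpace X] [CompactSpace X] (α : X ≃ₜ X)
    (hfwd : ∀ x y z : X,
      (∀ ε > 0, ∃ n : ℕ, dist ((⇑α)^[n] x) ((⇑α)^[n] y) < ε) →
      (∀ ε > 0, ∃ n : ℕ, dist ((⇑α)^[n] y) ((⇑α)^[n] z) < ε) →
      (∀ ε > 0, ∃ n : ℕ, dist ((⇑α)^[n] x) ((⇑α)^[n] z) < ε))
    (hbwd : ∀ x y z : X,
      (∀ ε > 0, ∃ n : ℕ, dist ((⇑α.symm)^[n] x) ((⇑α.symm)^[n] y) < ε) →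
      (∀ ε > 0, ∃ n : ℕ, dist ((⇑α.symm)^[n] y) ((⇑α.symm)^[n] z) < ε) →
      (∀ ε > 0, ∃ n : ℕ, dist ((⇑α.symm)^[n] x) ((⇑α.symm)^[n] z) < ε))
    (M Mp Mm : Set (X → X))
    (hM : IsKernelOf (closure {h : X → X | ∃ n : ℤ, h = zIter α n}) M)
    (hMp : IsKernelOf (closure {h : X → X | ∃ n : ℕ, h = (⇑α)^[n]}) Mp)
    (hMm : IsKernelOf (closure {h : X → X | ∃ n : ℕ, h = (⇑α.symm)^[n]}) Mm) :
    ((∀ x y z : X, ZProx α x y → ZProx α y z → ZProx α x z) ∧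
      (∃! L : Set (X → X),
        IsMinLeftIdealIn (closure {h : X → X | ∃ n : ℤ, h = zIter α n}) L) ∧
      M = Mp ∧ M = Mm) ∨
    ((¬∀ x y z : X, ZProx α x y → ZProx α y z → ZProx α x z) ∧
      Mp ∩ Mm = ∅ ∧
      (∀ L : Set (X → X),
        IsMinLeftIdealIn (closure {h : X → X | ∃ n : ℤ, h = zIter α n}) L ↔
          (L = Mp ∨ L = Mm))) := by
  change IsKernelOf (closure (ZT α)) M at hM
  change IsKernelOf (closure (FT α)) Mp at hMp
  change IsKernelOf (closure (FT α.symm)) Mm at hMm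
  simp only [← px_FT] at hfwd hbwd
  simp only [← px_ZT]
  change (_ ∧ (∃! L : Set (X → X), IsMinLeftIdealIn (closure (ZT α)) L) ∧ _) ∨ (_ ∧ _ ∧
    (∀ L : Set (X → X), IsMinLeftIdealIn (closure (ZT α)) L ↔ _))
  have hZ := ZT_TM α
  obtain ⟨hp1, hp2⟩ := min_half α hfwd hMp
  obtain ⟨hm1, hm2⟩ := min_half α.symm hbwd hMm
  have e1 : FT α ∪ FT α.symm = ZT α := (ZT_eq α).symm
  have e2 : FT α.symm ∪ FT α.symm.symm = ZT α := by
    rw [Homeomorph.symm_symm, union_comm, e1]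
  rw [e1] at hp1 hp2
  rw [e2] at hm1 hm2
  have hall : ∀ L, IsMinLeftIdealIn (closure (ZT α)) L → L = Mp ∨ L = Mm := by
    intro L hL
    obtain ⟨f, hf⟩ := hL.1.1
    have hfS := hL.1.2.1 hf
    rw [ZT_eq, closure_union] at hfS
    rcases hfS with hfS | hfS
    · exact Or.inl (hp2 L hL ⟨f, hf, hfS⟩)
    · exact Or.inr (hm2 L hL ⟨f, hf, hfS⟩)
  by_cases he : Mp = Mm
  · left
    subst he
    have hu : ∀ L', IsMinLeftIdealIn (closure (ZT α)) L' → L' = Mp :=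
      fun L' hL' => (hall L' hL').elim (fun h => h) (fun h => h)
    have hMe := hZ.kernel_eq hp1 hu hM
    exact ⟨hZ.trans_of_unique hp1 hu, ⟨Mp, hp1, hu⟩, hMe, hMe⟩
  · right
    refine ⟨fun ht => he (hZ.unique_of_trans ht hp1 hm1), ?_, fun L => ⟨hall L, ?_⟩⟩
    · by_contra hne
      exact he (min_inter hp1 hm1 (nonempty_iff_ne_empty.2 hne))
    · rintro (rfl | rfl)
      · exact hp1
      · exact hm1
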